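/- Let a, b, h be unit vectors in a real inner product space. Then ‖b − ⟨a,b⟩a‖ ≤ ‖b − ⟨h,b⟩h‖ + ‖h − ⟨a,h⟩a‖; equivalently, √(1 − ⟨a,b⟩²) ≤ √(1 − ⟨h,b⟩²) + √(1 − ⟨a,h⟩²). -/

import Mathlib

/-!
Write `P x = x - ⟪a, x⟫ • a` for the orthogonal projection onto the complement of `a`. It is
linear and norm-nonincreasing (`norm_sub_inner_smul_le`). Splitting `b = ⟪h, b⟫ • h + r` with
`r = b - ⟪h, b⟫ • h` gives `P b = P r + ⟪h, b⟫ • P h`, whose norm is at most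
`‖r‖ + |⟪h, b⟫| * ‖P h‖`, and `|⟪h, b⟫| ≤ 1` by Cauchy–Schwarz.
-/

open scoped RealInnerProductSpace

theorem norm_sub_inner_smul_le
    {E : Type*} [NormedAddCommGroup E] [InnerProductSpace ℝ E]
    (a x : E) (ha : ‖a‖ = 1) : ‖x - ⟪a, x⟫ • a‖ ≤ ‖x‖ := by
  have key : ‖x - ⟪a, x⟫ • a‖ ^ 2 = ‖x‖ ^ 2 - ⟪a, x⟫ ^ 2 := by
    rw [norm_sub_sq_real, real_inner_smul_right, norm_smul, ha, real_inner_comm a x, mul_one,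
      Real.norm_eq_abs, sq_abs]
    ring
  refine (sq_le_sq₀ (norm_nonneg _) (norm_nonneg _)).1 ?_
  rw [key]
  linarith [sq_nonneg ⟪a, x⟫]

/-- Triangle inequality for sines of angles between unit vectors: for unit vectors
`a`, `b`, `h` in a real inner product space,
`‖b − ⟨a,b⟩a‖ ≤ ‖b − ⟨h,b⟩h‖ + ‖h − ⟨a,h⟩a‖`. -/
theorem sin_angle_triangle
    {E : Type*} [NormedAddCommGroup E] [InnerProductSpace ℝ E]
    (a b h : E) (ha : ‖a‖ = 1) (hb : ‖b‖ = 1) (hh : ‖h‖ = 1) :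
    ‖b - ⟪a, b⟫ • a‖ ≤ ‖b - ⟪h, b⟫ • h‖ + ‖h - ⟪a, h⟫ • a‖ := by
  have split : b - ⟪a, b⟫ • a =
      ((b - ⟪h, b⟫ • h) - ⟪a, b - ⟪h, b⟫ • h⟫ • a) + ⟪h, b⟫ • (h - ⟪a, h⟫ • a) := by
    rw [inner_sub_right, real_inner_smul_right]
    module
  have hcs : |⟪h, b⟫| ≤ 1 := by simpa [hh, hb] using abs_real_inner_le_norm h b
  rw [split]
  refine (norm_add_le _ _).trans (add_le_add (norm_sub_inner_smul_le a _ ha) ?_)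
  rw [norm_smul, Real.norm_eq_abs]
  exact mul_le_of_le_one_left (norm_nonneg _) hcs
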